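/- arXiv:2002.02188 — 2 statements merged into one kernel-verified Lean document; each statement's English description precedes it below -/
import Mathlib

section
/- Let N be a positive integer and t > -log N. Then η(t,N) - η_{n-1}(t,N) < 1/(24 n (t + log n)^2) for all n ≥ N, and η(t,N) - η_{n-1}(t,N) > 1/(24(n+1)(t+log(n+1))^2) - 1/(12(n+1)(t+log(n+1))^3); consequently η(t,N) = η_{n-1}(t,N) + (1+o(1))/(24 n (log n)^2) as n → ∞. -/
open Real Filter MeasureTheory Finset Topology

/-- The sequence `η_n(t,N) = Σ_{k=N}^n (1/(t+log(k+1/2)) - 1/(H_k - γ + t))`. -/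
noncomputable def eta (N : ℕ) (t : ℝ) (n : ℕ) : ℝ :=
  ∑ k ∈ Finset.Icc N n,
    (1 / (t + Real.log ((k : ℝ) + 1/2)) -
      1 / ((harmonic k : ℝ) - Real.eulerMascheroniConstant + t))

/-!
Write `e_k = H_k - γ - log (k + 1/2)`. DeTemple's argument gives
`1 / (24 (k + 1)²) < e_k < 1 / (24 (k + 1/2)²)`: all three sequences tend to `0`, and the series of
`log ((1 + x) / (1 - x))` at `x = 1 / (2 (k + 1))` compares their increments. With
`φ x = 1 / (24 x² (t + log x)²)`, the `k`-th term of `η` therefore lies between `φ (k + 1)` and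
`φ (k + 1/2)`. Concavity of `log` shows that `φ (k + 1/2)` is less than the drop of
`1 / (24 x (t + log x)²)` over `[k, k + 1]`, and the mean value theorem that `φ (k + 1)` exceeds
the drop of `1 / (24 x (t + log x)²) - 1 / (12 x (t + log x)³)` over `[k + 1, k + 2]`; both tail
bounds follow by telescoping.
-/

section Limits

variable {α : Type*} [TopologicalSpace α] [Preorder α] [OrderClosedTopology α]
  {u : ℕ → α} {l : α} {n : ℕ}

theorem lt_of_tendsto_of_forall_lt_succ (hu : Tendsto u atTop (𝓝 l))
    (hlt : ∀ m, n ≤ m → u m < u (m + 1)) : u n < l := by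
  have hmono : StrictMono fun j => u (j + n) := strictMono_nat_of_lt_succ fun j => by
    simpa only [add_right_comm] using hlt (j + n) (Nat.le_add_left n j)
  have hle := hmono.monotone.ge_of_tendsto (hu.comp (tendsto_add_atTop_nat n)) 1
  simpa only [zero_add] using (hmono one_pos).trans_le hle

theorem lt_of_tendsto_of_forall_succ_lt (hu : Tendsto u atTop (𝓝 l))
    (hlt : ∀ m, n ≤ m → u (m + 1) < u m) : l < u n :=
  lt_of_tendsto_of_forall_lt_succ (α := αᵒᵈ) hu hlt

end Limits

section HarmonicError

theorem two_thirds_mul_cube_le_log_div_sub {x : ℝ} (h0 : 0 ≤ x) (h1 : x < 1) :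
    2 / 3 * x ^ 3 ≤ log ((1 + x) / (1 - x)) - 2 * x := by
  have hseries : x + x ^ 3 / 3 ≤ 1 / 2 * log ((1 + x) / (1 - x)) := by
    convert sum_range_le_log_div h0 h1 2 using 1
    norm_num [Finset.sum_range_succ]
  linarith

theorem log_div_sub_lt_two_thirds_mul_cube_div {x : ℝ} (h0 : 0 < x) (h1 : x < 1) :
    log ((1 + x) / (1 - x)) - 2 * x < 2 / 3 * x ^ 3 / (1 - x ^ 2) ^ 2 := by
  have hy : 0 < 1 - x ^ 2 := by nlinarith
  have hseries : 1 / 2 * log ((1 + x) / (1 - x)) ≤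
      x + x ^ 3 / 3 + x ^ 5 / 5 + x ^ 7 / (1 - x ^ 2) := by
    convert log_div_le_sum_range_add h0.le h1 3 using 1
    norm_num [Finset.sum_range_succ]
  have hgap : 2 / 3 * x ^ 3 / (1 - x ^ 2) ^ 2
      - 2 * (x ^ 3 / 3 + x ^ 5 / 5 + x ^ 7 / (1 - x ^ 2))
      = 2 * x ^ 5 * (7 - 14 * x ^ 2 + 12 * (x ^ 2) ^ 2) / (15 * (1 - x ^ 2) ^ 2) := by
    field_simp
    ring
  have hquad : 0 < 7 - 14 * x ^ 2 + 12 * (x ^ 2) ^ 2 := by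
    nlinarith [sq_nonneg (12 * x ^ 2 - 7)]
  have hgap_pos : 0 < 2 * x ^ 5 * (7 - 14 * x ^ 2 + 12 * (x ^ 2) ^ 2) / (15 * (1 - x ^ 2) ^ 2) := by
    positivity
  linarith

/-- The error `H_k - γ - log (k + 1/2)` of DeTemple's midpoint approximation to the harmonic
numbers. -/
noncomputable def harmonicError (k : ℕ) : ℝ :=
  (harmonic k : ℝ) - eulerMascheroniConstant - log ((k : ℝ) + 1 / 2)

theorem tendsto_harmonicError : Tendsto harmonicError atTop (𝓝 0) := by
  have hlog := (tendsto_log_comp_add_sub_log (1 / 2)).comp (tendsto_natCast_atTop_atTop (R := ℝ))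
  have h := (tendsto_harmonic_sub_log.sub hlog).sub_const eulerMascheroniConstant
  rw [sub_zero, sub_self] at h
  refine h.congr fun k => ?_
  simp only [harmonicError, Function.comp]
  ring

theorem harmonicError_sub_succ (k : ℕ) :
    harmonicError k - harmonicError (k + 1) =
      log ((1 + 1 / (2 * ((k : ℝ) + 1))) / (1 - 1 / (2 * ((k : ℝ) + 1))))
        - 2 * (1 / (2 * ((k : ℝ) + 1))) := by
  have hratio : (1 + 1 / (2 * ((k : ℝ) + 1))) / (1 - 1 / (2 * ((k : ℝ) + 1)))
      = ((k : ℝ) + 1 + 1 / 2) / ((k : ℝ) + 1 / 2) := by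
    have h : 1 - 1 / (2 * ((k : ℝ) + 1)) = ((k : ℝ) + 1 / 2) / ((k : ℝ) + 1) := by
      field_simp
      ring
    rw [h]
    field_simp
  rw [hratio, log_div (by positivity) (by positivity)]
  simp only [harmonicError, harmonic_succ]
  push_cast
  field_simp
  ring

theorem tendsto_one_div_mul_natCast_add_sq (c a : ℝ) :
    Tendsto (fun k : ℕ => 1 / (c * ((k : ℝ) + a) ^ 2)) atTop (𝓝 0) := by
  have hadd := tendsto_atTop_add_const_right atTop a (tendsto_natCast_atTop_atTop (R := ℝ))
  have h := ((tendsto_inv_atTop_zero.comp hadd).pow 2).const_mul c⁻¹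
  rw [zero_pow two_ne_zero, mul_zero] at h
  refine h.congr fun k => ?_
  simp only [Function.comp, one_div, mul_inv, inv_pow]

theorem one_div_lt_harmonicError (k : ℕ) : 1 / (24 * ((k : ℝ) + 1) ^ 2) < harmonicError k := by
  have hlim := tendsto_harmonicError.sub (tendsto_one_div_mul_natCast_add_sq 24 1)
  rw [sub_zero] at hlim
  refine sub_pos.mp (lt_of_tendsto_of_forall_succ_lt hlim fun m _ => ?_)
  have hx1 : 1 / (2 * ((m : ℝ) + 1)) < 1 := by
    rw [div_lt_one (by positivity)]
    linarith [m.cast_nonneg (α := ℝ)]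
  have hlog := two_thirds_mul_cube_le_log_div_sub (by positivity) hx1
  rw [← harmonicError_sub_succ] at hlog
  have htelescope : 1 / (24 * ((m : ℝ) + 1) ^ 2) - 1 / (24 * ((m : ℝ) + 1 + 1) ^ 2)
      < 2 / 3 * (1 / (2 * ((m : ℝ) + 1))) ^ 3 := by
    rw [← sub_pos]
    have hgap : 2 / 3 * (1 / (2 * ((m : ℝ) + 1))) ^ 3
        - (1 / (24 * ((m : ℝ) + 1) ^ 2) - 1 / (24 * ((m : ℝ) + 1 + 1) ^ 2))
        = (3 * m + 5) / (24 * ((m : ℝ) + 1) ^ 3 * ((m : ℝ) + 1 + 1) ^ 2) := by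
      field_simp
      ring
    rw [hgap]
    positivity
  push_cast
  linarith

theorem harmonicError_pos (k : ℕ) : 0 < harmonicError k :=
  lt_trans (by positivity) (one_div_lt_harmonicError k)

theorem harmonicError_lt_one_div (k : ℕ) :
    harmonicError k < 1 / (24 * ((k : ℝ) + 1 / 2) ^ 2) := by
  have hlim := tendsto_harmonicError.sub (tendsto_one_div_mul_natCast_add_sq 24 (1 / 2))
  rw [sub_zero] at hlim
  refine sub_neg.mp (lt_of_tendsto_of_forall_lt_succ hlim fun m _ => ?_)
  have hx1 : 1 / (2 * ((m : ℝ) + 1)) < 1 := by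
    rw [div_lt_one (by positivity)]
    linarith [m.cast_nonneg (α := ℝ)]
  have hlog := log_div_sub_lt_two_thirds_mul_cube_div (by positivity) hx1
  rw [← harmonicError_sub_succ] at hlog
  have htelescope :
      2 / 3 * (1 / (2 * ((m : ℝ) + 1))) ^ 3 / (1 - (1 / (2 * ((m : ℝ) + 1))) ^ 2) ^ 2
      = 1 / (24 * ((m : ℝ) + 1 / 2) ^ 2) - 1 / (24 * ((m : ℝ) + 1 + 1 / 2) ^ 2) := by
    have h : 1 - (1 / (2 * ((m : ℝ) + 1))) ^ 2
        = ((m : ℝ) + 1 / 2) * ((m : ℝ) + 1 + 1 / 2) / ((m : ℝ) + 1) ^ 2 := by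
      field_simp
      ring
    rw [h]
    field_simp
    ring
  push_cast
  linarith

end HarmonicError

section Term

/-- The `k`-th summand `1 / (t + log (k + 1/2)) - 1 / (H_k - γ + t)` of `eta`, with `0` for the
reciprocal of a vanishing denominator. -/
noncomputable def etaTerm (t : ℝ) (k : ℕ) : ℝ :=
  1 / (t + log ((k : ℝ) + 1 / 2)) - 1 / ((harmonic k : ℝ) - eulerMascheroniConstant + t)

theorem eta_eq_eta_pred_add_etaTerm {N n : ℕ} (hn : 0 < n) (hNn : N ≤ n) (t : ℝ) :
    eta N t n = eta N t (n - 1) + etaTerm t n := by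
  obtain ⟨m, rfl⟩ := Nat.exists_eq_succ_of_ne_zero hn.ne'
  exact Finset.sum_Icc_succ_top hNn _

theorem one_div_sub_one_div_lt {a b : ℝ} (ha : 0 < a) (hab : a < b) :
    1 / a - 1 / b < (b - a) / a ^ 2 := by
  have hb : 0 < b := ha.trans hab
  rw [one_div, one_div, inv_sub_inv ha.ne' hb.ne', sq]
  exact div_lt_div_of_pos_left (sub_pos.mpr hab) (by positivity) (by gcongr)

theorem lt_one_div_sub_one_div {a b : ℝ} (ha : 0 < a) (hab : a < b) :
    (b - a) / b ^ 2 < 1 / a - 1 / b := by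
  have hb : 0 < b := ha.trans hab
  rw [one_div, one_div, inv_sub_inv ha.ne' hb.ne', sq]
  exact div_lt_div_of_pos_left (sub_pos.mpr hab) (by positivity) (by gcongr)

variable {t : ℝ} {k : ℕ}

theorem harmonicError_eq_sub (t : ℝ) (k : ℕ) :
    harmonicError k =
      (harmonic k - eulerMascheroniConstant + t) - (t + log ((k : ℝ) + 1 / 2)) := by
  rw [harmonicError]
  ring

theorem add_log_lt_harmonic_sub_add (t : ℝ) (k : ℕ) :
    t + log ((k : ℝ) + 1 / 2) < harmonic k - eulerMascheroniConstant + t := by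
  rw [← sub_pos, ← harmonicError_eq_sub]
  exact harmonicError_pos k

theorem etaTerm_lt (ht : 0 < t + log ((k : ℝ) + 1 / 2)) :
    etaTerm t k <
      1 / (24 * (((k : ℝ) + 1 / 2) * (t + log ((k : ℝ) + 1 / 2))) ^ 2) := by
  calc etaTerm t k < harmonicError k / (t + log ((k : ℝ) + 1 / 2)) ^ 2 := by
        rw [harmonicError_eq_sub t]
        exact one_div_sub_one_div_lt ht (add_log_lt_harmonic_sub_add t k)
    _ < 1 / (24 * ((k : ℝ) + 1 / 2) ^ 2) / (t + log ((k : ℝ) + 1 / 2)) ^ 2 := by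
        gcongr
        exact harmonicError_lt_one_div k
    _ = 1 / (24 * (((k : ℝ) + 1 / 2) * (t + log ((k : ℝ) + 1 / 2))) ^ 2) := by
        rw [div_div, mul_pow, mul_assoc]

theorem lt_etaTerm (ht : 0 < t + log ((k : ℝ) + 1 / 2)) :
    1 / (24 * (((k : ℝ) + 1) * (t + log ((k : ℝ) + 1))) ^ 2) < etaTerm t k := by
  have hab := add_log_lt_harmonic_sub_add t k
  have hb : 0 < harmonic k - eulerMascheroniConstant + t := ht.trans hab
  have hb_lt : harmonic k - eulerMascheroniConstant + t < t + log ((k : ℝ) + 1) := by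
    have h : harmonic k - log ((k : ℝ) + 1) < eulerMascheroniConstant :=
      eulerMascheroniSeq_lt_eulerMascheroniConstant k
    linarith
  calc 1 / (24 * (((k : ℝ) + 1) * (t + log ((k : ℝ) + 1))) ^ 2)
      = 1 / (24 * ((k : ℝ) + 1) ^ 2) / (t + log ((k : ℝ) + 1)) ^ 2 := by
        rw [div_div, mul_pow, mul_assoc]
    _ < harmonicError k / (t + log ((k : ℝ) + 1)) ^ 2 := by
        have hv : 0 < t + log ((k : ℝ) + 1) := hb.trans hb_lt
        gcongr
        exact one_div_lt_harmonicError k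
    _ < harmonicError k / (harmonic k - eulerMascheroniConstant + t) ^ 2 :=
        div_lt_div_of_pos_left (harmonicError_pos k) (by positivity) (by gcongr)
    _ < etaTerm t k := by
        rw [harmonicError_eq_sub t]
        exact lt_one_div_sub_one_div ht hab

end Term

section Comparison

/-- The function `1 / (x (t + log x)^j)`. The tail bounds for `eta` are combinations of these for
`j = 2` and `j = 3`. -/
noncomputable def invMulLogPow (t : ℝ) (j : ℕ) (x : ℝ) : ℝ :=
  1 / (x * (t + log x) ^ j)

theorem hasDerivAt_invMulLogPow {t x : ℝ} (j : ℕ) (hx : x ≠ 0) (hu : t + log x ≠ 0) :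
    HasDerivAt (invMulLogPow t j)
      (-(1 / (x ^ 2 * (t + log x) ^ j)) - j / (x ^ 2 * (t + log x) ^ (j + 1))) x := by
  have hpow := ((hasDerivAt_log hx).const_add t).fun_pow j
  have h := ((hasDerivAt_id' x).fun_mul hpow).fun_inv (mul_ne_zero hx (pow_ne_zero j hu))
  have hfun : invMulLogPow t j = fun y => (y * (t + log y) ^ j)⁻¹ :=
    funext fun y => one_div _
  rw [hfun]
  refine h.congr_deriv ?_
  rcases j with _ | j
  · simp only [pow_zero, Nat.cast_zero, zero_mul, zero_div]
    field_simp
    ring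
  · simp only [Nat.add_sub_cancel]
    field_simp
    ring

theorem add_log_pos_of_le {t x y : ℝ} (hx : 0 < x) (hxy : x ≤ y) (hu : 0 < t + log x) :
    0 < t + log y :=
  hu.trans_le (by gcongr)

theorem add_log_mul_add_log_le_sq {t x y : ℝ} (hx : 0 < x) (hy : 0 < y)
    (hux : 0 ≤ t + log x) (huy : 0 ≤ t + log y) :
    (t + log x) * (t + log y) ≤ (t + log ((x + y) / 2)) ^ 2 := by
  have hlog : log x + log y ≤ 2 * log ((x + y) / 2) := by
    rw [← log_mul hx.ne' hy.ne', ← Nat.cast_two, ← log_pow]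
    apply log_le_log (by positivity)
    push_cast
    linarith [four_mul_le_sq_add x y]
  nlinarith [sq_nonneg (log x - log y)]

theorem one_div_mul_mul_lt_one_div_mul_sq_sub {x y u v : ℝ} (hx : 0 < x) (hy : 0 < y)
    (hu : 0 < u) (huv : u < v) :
    (y - x) / (x * y * (u * v)) < 1 / (x * u ^ 2) - 1 / (y * v ^ 2) := by
  have hv : 0 < v := hu.trans huv
  have hgap : 1 / (x * u ^ 2) - 1 / (y * v ^ 2) - (y - x) / (x * y * (u * v))
      = (v - u) * (y * v + x * u) / (x * y * (u * v) ^ 2) := by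
    field_simp
    ring
  rw [← sub_pos, hgap]
  exact div_pos (mul_pos (sub_pos.mpr huv) (by positivity)) (by positivity)

theorem one_div_midpoint_sq_lt_invMulLogPow_sub {t x : ℝ} (hx : 0 < x) (hu : 0 < t + log x) :
    1 / (24 * ((x + 1 / 2) * (t + log (x + 1 / 2))) ^ 2) <
      invMulLogPow t 2 x / 24 - invMulLogPow t 2 (x + 1) / 24 := by
  have huv : t + log x < t + log (x + 1) := by gcongr; linarith
  have hv : 0 < t + log (x + 1) := hu.trans huv
  have hmid := add_log_mul_add_log_le_sq hx (by positivity : 0 < x + 1) hu.le hv.le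
  rw [show (x + (x + 1)) / 2 = x + 1 / 2 by ring] at hmid
  have hden : x * (x + 1) * ((t + log x) * (t + log (x + 1)))
      ≤ ((x + 1 / 2) * (t + log (x + 1 / 2))) ^ 2 := by
    rw [mul_pow]
    gcongr
    linarith
  calc 1 / (24 * ((x + 1 / 2) * (t + log (x + 1 / 2))) ^ 2)
      ≤ 1 / (24 * (x * (x + 1) * ((t + log x) * (t + log (x + 1))))) := by gcongr
    _ = (x + 1 - x) / (x * (x + 1) * ((t + log x) * (t + log (x + 1)))) / 24 := by
        rw [add_sub_cancel_left, div_div, mul_comm 24]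
    _ < (invMulLogPow t 2 x - invMulLogPow t 2 (x + 1)) / 24 := by
        gcongr
        exact one_div_mul_mul_lt_one_div_mul_sq_sub hx (by positivity) hu huv
    _ = invMulLogPow t 2 x / 24 - invMulLogPow t 2 (x + 1) / 24 := sub_div _ _ _

theorem invMulLogPow_sub_lt_one_div_sq {t x : ℝ} (hx : 0 < x) (hu : 0 < t + log x) :
    (invMulLogPow t 2 x / 24 - invMulLogPow t 3 x / 12) -
        (invMulLogPow t 2 (x + 1) / 24 - invMulLogPow t 3 (x + 1) / 12) <
      1 / (24 * (x * (t + log x)) ^ 2) := by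
  have hpos : ∀ y, x ≤ y → 0 < y ∧ 0 < t + log y := fun y hy =>
    ⟨hx.trans_le hy, add_log_pos_of_le hx hy hu⟩
  have hderiv : ∀ y, x ≤ y →
      HasDerivAt (fun y => invMulLogPow t 2 y / 24 - invMulLogPow t 3 y / 12)
        (-(1 / (24 * (y * (t + log y)) ^ 2)) + 1 / (4 * y ^ 2 * (t + log y) ^ 4)) y := by
    intro y hy
    obtain ⟨hy0, huy⟩ := hpos y hy
    refine (((hasDerivAt_invMulLogPow 2 hy0.ne' huy.ne').div_const 24).sub
      ((hasDerivAt_invMulLogPow 3 hy0.ne' huy.ne').div_const 12)).congr_deriv ?_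
    field_simp
    ring
  obtain ⟨c, ⟨hxc, -⟩, hslope⟩ := exists_hasDerivAt_eq_slope _ _ (lt_add_one x)
    (fun y hy => (hderiv y hy.1).continuousAt.continuousWithinAt)
    (fun y hy => hderiv y hy.1.le)
  obtain ⟨hc, huc⟩ := hpos c hxc.le
  rw [add_sub_cancel_left, div_one] at hslope
  have hquartic : 0 < 1 / (4 * c ^ 2 * (t + log c) ^ 4) := by positivity
  have hanti : 1 / (24 * (c * (t + log c)) ^ 2) ≤ 1 / (24 * (x * (t + log x)) ^ 2) := by
    gcongr
  linarith

end Comparison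

section Asymptotics

theorem tendsto_add_log_add (t s : ℝ) : Tendsto (fun x => t + log (x + s)) atTop atTop :=
  tendsto_atTop_add_const_left _ t <|
    tendsto_log_atTop.comp <| tendsto_atTop_add_const_right _ s tendsto_id

theorem tendsto_invMulLogPow (t : ℝ) (j : ℕ) : Tendsto (invMulLogPow t j) atTop (𝓝 0) := by
  have hlog := tendsto_inv_atTop_zero.comp (tendsto_add_log_add t 0)
  have h := tendsto_inv_atTop_zero.mul (hlog.pow j)
  rw [zero_mul] at h
  refine h.congr fun x => ?_
  simp only [Function.comp, invMulLogPow, add_zero, one_div, mul_inv, inv_pow]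

theorem tendsto_log_div_add_log_add (t s : ℝ) :
    Tendsto (fun x => log x / (t + log (x + s))) atTop (𝓝 1) := by
  have hu := tendsto_inv_atTop_zero.comp (tendsto_add_log_add t s)
  have h := ((hu.const_mul t).add ((tendsto_log_comp_add_sub_log s).mul hu)).const_sub 1
  rw [mul_zero, mul_zero, add_zero, sub_zero] at h
  refine h.congr' ?_
  filter_upwards [(tendsto_add_log_add t s).eventually_ne_atTop 0] with x hx
  simp only [Function.comp]
  field_simp
  ring

theorem tendsto_invMulLogPow_add_mul (t s : ℝ) (j : ℕ) :
    Tendsto (fun n : ℕ => invMulLogPow t j (n + s) * (n * log n ^ j)) atTop (𝓝 1) := by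
  have hlog := (tendsto_log_div_add_log_add t s).comp (tendsto_natCast_atTop_atTop (R := ℝ))
  have h := (tendsto_natCast_div_add_atTop s).mul (hlog.pow j)
  rw [one_pow, mul_one] at h
  refine h.congr fun n => ?_
  simp only [Function.comp]
  rw [invMulLogPow, div_pow, div_mul_div_comm, one_div_mul_eq_div]

theorem tendsto_invMulLogPow_succ_add_mul (t s : ℝ) (j : ℕ) :
    Tendsto (fun n : ℕ => invMulLogPow t (j + 1) (n + s) * (n * log n ^ j)) atTop (𝓝 0) := by
  have hlog := tendsto_log_atTop.comp (tendsto_natCast_atTop_atTop (R := ℝ))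
  have h := (tendsto_invMulLogPow_add_mul t s (j + 1)).mul (tendsto_inv_atTop_zero.comp hlog)
  rw [mul_zero] at h
  refine h.congr' ?_
  filter_upwards [hlog.eventually_ne_atTop 0] with n hn
  simp only [Function.comp] at hn ⊢
  field_simp
  ring

end Asymptotics

section Tail

variable {N n : ℕ} {t L : ℝ}

theorem sub_eta_pred_lt (hn : 0 < n) (hNn : N ≤ n) (hu : 0 < t + log n)
    (hL : Tendsto (eta N t) atTop (𝓝 L)) :
    L - eta N t (n - 1) < invMulLogPow t 2 n / 24 := by
  have hupper : Tendsto (fun m : ℕ => invMulLogPow t 2 m / 24) atTop (𝓝 0) := by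
    simpa using ((tendsto_invMulLogPow t 2).comp
      (tendsto_natCast_atTop_atTop (R := ℝ))).div_const 24
  have hlim := (hL.comp (tendsto_sub_atTop_nat 1)).add hupper
  rw [add_zero] at hlim
  refine sub_lt_iff_lt_add'.mpr (lt_of_tendsto_of_forall_succ_lt hlim fun m hnm => ?_)
  have hm : 0 < (m : ℝ) := by exact_mod_cast hn.trans_le hnm
  have hum : 0 < t + log m := add_log_pos_of_le (by exact_mod_cast hn) (by exact_mod_cast hnm) hu
  have hterm := etaTerm_lt (add_log_pos_of_le (y := (m : ℝ) + 1 / 2) hm (by linarith) hum)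
  have hstep := one_div_midpoint_sq_lt_invMulLogPow_sub hm hum
  simp only [Function.comp, Nat.add_sub_cancel, Nat.cast_succ,
    eta_eq_eta_pred_add_etaTerm (hn.trans_le hnm) (hNn.trans hnm)]
  linarith

theorem lt_sub_eta_pred (hn : 0 < n) (hNn : N ≤ n) (hu : 0 < t + log ((n : ℝ) + 1 / 2))
    (hL : Tendsto (eta N t) atTop (𝓝 L)) :
    invMulLogPow t 2 (n + 1) / 24 - invMulLogPow t 3 (n + 1) / 12 < L - eta N t (n - 1) := by
  have hlower : Tendsto (fun m : ℕ => invMulLogPow t 2 (m + 1) / 24 - invMulLogPow t 3 (m + 1) / 12)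
      atTop (𝓝 0) := by
    have h := ((tendsto_invMulLogPow t 2).div_const 24).sub
      ((tendsto_invMulLogPow t 3).div_const 12)
    rw [zero_div, zero_div, sub_zero] at h
    exact h.comp (tendsto_atTop_add_const_right _ 1 tendsto_natCast_atTop_atTop)
  have hlim := (hL.comp (tendsto_sub_atTop_nat 1)).add hlower
  rw [add_zero] at hlim
  refine lt_sub_iff_add_lt'.mpr (lt_of_tendsto_of_forall_lt_succ hlim fun m hnm => ?_)
  have hum : 0 < t + log ((m : ℝ) + 1 / 2) := add_log_pos_of_le (by positivity) (by gcongr) hu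
  have hterm := lt_etaTerm hum
  have hstep := invMulLogPow_sub_lt_one_div_sq (x := (m : ℝ) + 1) (by positivity)
    (add_log_pos_of_le (by positivity) (by linarith) hum)
  simp only [Function.comp, Nat.add_sub_cancel, Nat.cast_succ,
    eta_eq_eta_pred_add_etaTerm (hn.trans_le hnm) (hNn.trans hnm)]
  linarith

theorem tendsto_sub_eta_pred_mul (hL : Tendsto (eta N t) atTop (𝓝 L)) :
    Tendsto (fun n : ℕ => (L - eta N t (n - 1)) * (24 * n * (log n) ^ 2)) atTop (𝓝 1) := by
  have hupper : Tendsto (fun n : ℕ => invMulLogPow t 2 n / 24 * (24 * n * (log n) ^ 2))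
      atTop (𝓝 1) := by
    refine (tendsto_invMulLogPow_add_mul t 0 2).congr fun n => ?_
    rw [add_zero]
    ring
  have hlower : Tendsto
      (fun n : ℕ => (invMulLogPow t 2 (n + 1) / 24 - invMulLogPow t 3 (n + 1) / 12)
        * (24 * n * (log n) ^ 2)) atTop (𝓝 1) := by
    have h := (tendsto_invMulLogPow_add_mul t 1 2).sub
      ((tendsto_invMulLogPow_succ_add_mul t 1 2).const_mul 2)
    rw [mul_zero, sub_zero] at h
    refine h.congr fun n => ?_
    ring
  have hlog := ((tendsto_add_log_add t 0).comp
    (tendsto_natCast_atTop_atTop (R := ℝ))).eventually_gt_atTop 0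
  simp only [Function.comp, add_zero] at hlog
  refine tendsto_of_tendsto_of_tendsto_of_le_of_le' hlower hupper ?_ ?_ <;>
    filter_upwards [hlog, eventually_gt_atTop 0, eventually_ge_atTop N] with n hu hn hNn <;>
    refine mul_le_mul_of_nonneg_right ?_ (by positivity)
  · have hmid := add_log_pos_of_le (by exact_mod_cast hn) (by linarith : (n : ℝ) ≤ n + 1 / 2) hu
    exact (lt_sub_eta_pred hn hNn hmid hL).le
  · exact (sub_eta_pred_lt hn hNn hu hL).le

end Tail

theorem stmt_10_general (N : ℕ) (t L : ℝ) (hL : Tendsto (eta N t) atTop (𝓝 L)) :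
    (∀ n : ℕ, 0 < n → N ≤ n → -log n < t →
      L - eta N t (n - 1) < 1 / (24 * n * (t + log n) ^ 2) ∧
      1 / (24 * ((n : ℝ) + 1) * (t + log ((n : ℝ) + 1)) ^ 2) -
        1 / (12 * ((n : ℝ) + 1) * (t + log ((n : ℝ) + 1)) ^ 3) <
        L - eta N t (n - 1)) ∧
    Tendsto (fun n : ℕ => (L - eta N t (n - 1)) * (24 * n * (log n) ^ 2)) atTop (𝓝 1) := by
  refine ⟨fun n hn hNn ht => ?_, tendsto_sub_eta_pred_mul hL⟩
  have hu : 0 < t + log n := by linarith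
  have hmid := add_log_pos_of_le (by exact_mod_cast hn) (by linarith : (n : ℝ) ≤ n + 1 / 2) hu
  have hconst (c x : ℝ) (j : ℕ) : 1 / (c * x * (t + log x) ^ j) = invMulLogPow t j x / c := by
    rw [invMulLogPow, div_div, mul_comm _ c, mul_assoc]
  simp only [hconst]
  exact ⟨sub_eta_pred_lt hn hNn hu hL, lt_sub_eta_pred hn hNn hmid hL⟩

theorem stmt_10 (N : ℕ) (hN : 0 < N) (t : ℝ) (ht : -Real.log N < t)
    (L : ℝ) (hL : Filter.Tendsto (eta N t) Filter.atTop (𝓝 L)) :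
    (∀ n : ℕ, N ≤ n →
      L - eta N t (n - 1) < 1 / (24 * n * (t + Real.log n)^2) ∧
      1 / (24 * ((n : ℝ) + 1) * (t + Real.log ((n : ℝ) + 1))^2) -
        1 / (12 * ((n : ℝ) + 1) * (t + Real.log ((n : ℝ) + 1))^3) <
        L - eta N t (n - 1)) ∧
    Filter.Tendsto
      (fun n : ℕ => (L - eta N t (n - 1)) * (24 * n * (Real.log n)^2))
      Filter.atTop (𝓝 1) := by
  obtain ⟨hbounds, hasymp⟩ := stmt_10_general N t L hL
  exact ⟨fun n hn => hbounds n (hN.trans_le hn) hn (ht.trans_le' (by gcongr)), hasymp⟩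
end

section
/- Let N be a positive integer and t > -log N. Define θ_n(t,N) = ∫_N^n dx/(t+log x) - Σ_{k=N}^{n-1} 1/(H_k - γ + t). Then for every nonnegative integer j, the limit of (-1)^j (d^j/dt^j) θ_n(t,N) as n → ∞ exists, equals j! · lim_{n→∞}(∫_N^n dx/(t+log x)^{j+1} - Σ_{k=N}^{n-1} 1/(H_k-γ+t)^{j+1}), and is strictly positive; in particular θ(t,N) = lim_n θ_n(t,N) is a strictly totally monotone function of t on (-log N, ∞). -/
open Real Filter MeasureTheory Finset Topology

/-- `θ_n(·,N)` as a function of `t`: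
`θ_n(t,N) = ∫_N^n dx/(t+log x) - Σ_{k=N}^{n-1} 1/(H_k - γ + t)`. -/
noncomputable def thetaFun (N n : ℕ) (s : ℝ) : ℝ :=
  (∫ x in (N : ℝ)..(n : ℝ), 1 / (s + Real.log x)) -
    ∑ k ∈ Finset.Ico N n, 1 / ((harmonic k : ℝ) - Real.eulerMascheroniConstant + s)

/-- The limit function `θ(·,N) = lim_{n→∞} θ_n(·,N)`. -/
noncomputable def thetaLim (N : ℕ) (s : ℝ) : ℝ :=
  limUnder Filter.atTop (fun n : ℕ => thetaFun N n s)

/-!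
With nodes `x_k = exp (H_k - γ)`, each sum in the statement is a quadrature sum `∑ g (x_k)` for
`g x = 1 / (s + log x) ^ p`, a convex strictly decreasing function. Since `k + 1/2 < x_k < k + 1`,
comparison with the midpoint rule (Hermite–Hadamard) shows that `∫_N^n g - ∑ g (x_k)` strictly
increases in `n`, and comparison with the left and right endpoints shows that its tail beyond `n` is
at most `g n`. That tail estimate is locally uniform in `s`, and differentiating in `s` only raises
the exponent: `d/ds (s + u)⁻ᵖ = -p (s + u)⁻ᵖ⁻¹`. Hence the limit may be differentiated termwise.
-/

/-! ### Quadrature of convex decreasing functions -/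

/-- Midpoint half of the **Hermite–Hadamard inequality**. -/
lemma sub_mul_midpoint_le_integral_of_convexOn {f : ℝ → ℝ} {a b : ℝ} (hab : a ≤ b)
    (hf : ConvexOn ℝ (Set.Icc a b) f) (hint : IntervalIntegrable f volume a b) :
    (b - a) * f ((a + b) / 2) ≤ ∫ x in a..b, f x := by
  have hrefl : IntervalIntegrable (fun x => f (a + b - x)) volume a b := by
    simpa using (hint.comp_sub_left (a + b)).symm
  have hrefl_eq : ∫ x in a..b, f (a + b - x) = ∫ x in a..b, f x := by
    simp [intervalIntegral.integral_comp_sub_left]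
  have hmid : ∀ x ∈ Set.Icc a b, 2 * f ((a + b) / 2) ≤ f x + f (a + b - x) := by
    intro x hx
    have hx' : a + b - x ∈ Set.Icc a b := ⟨by linarith [hx.2], by linarith [hx.1]⟩
    have hconv := hf.2 hx hx' one_half_pos.le one_half_pos.le (add_halves 1)
    simp only [smul_eq_mul] at hconv
    rw [show 1 / 2 * x + 1 / 2 * (a + b - x) = (a + b) / 2 by ring] at hconv
    linarith
  have hmono := intervalIntegral.integral_mono_on hab intervalIntegrable_const
    (hint.add hrefl) hmid
  rw [intervalIntegral.integral_const, intervalIntegral.integral_add hint hrefl, hrefl_eq,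
    smul_eq_mul] at hmono
  linarith

/-- The error `∫_N^n g - ∑_{N ≤ k < n} g (x k)` of the quadrature rule with one node `x k` for each
unit interval `[k, k + 1]`. -/
noncomputable def quadratureGap (g : ℝ → ℝ) (x : ℕ → ℝ) (N n : ℕ) : ℝ :=
  (∫ y in (N : ℝ)..(n : ℝ), g y) - ∑ k ∈ Finset.Ico N n, g (x k)

/-- The quadrature error on `[N, ∞)`, as the limit of `quadratureGap g x N n`. It is a junk value
when that limit does not exist. -/
noncomputable def quadratureGapLim (g : ℝ → ℝ) (x : ℕ → ℝ) (N : ℕ) : ℝ :=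
  limUnder atTop (quadratureGap g x N)

/-- `g` is convex, strictly decreasing and nonnegative on `S`: the integrands for which the
quadrature error converges to a positive limit. -/
structure ConvexDecreasingOn (g : ℝ → ℝ) (S : Set ℝ) : Prop where
  convexOn : ConvexOn ℝ S g
  strictAntiOn : StrictAntiOn g S
  nonneg : ∀ y ∈ S, 0 ≤ g y

section QuadratureGap

variable {g : ℝ → ℝ} {x : ℕ → ℝ} {N n m : ℕ}

lemma intervalIntegrable_natCast_of_antitoneOn (hg : AntitoneOn g (Set.Ici (N : ℝ)))
    (hNn : N ≤ n) (hnm : n ≤ m) : IntervalIntegrable g volume n m :=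
  (hg.mono fun y hy => by
    rw [Set.uIcc_of_le (Nat.cast_le.2 hnm)] at hy
    exact (Nat.cast_le.2 hNn).trans hy.1).intervalIntegrable

lemma quadratureGap_add_adjacent (hg : AntitoneOn g (Set.Ici (N : ℝ))) (hNn : N ≤ n)
    (hnm : n ≤ m) : quadratureGap g x N n + quadratureGap g x n m = quadratureGap g x N m := by
  rw [quadratureGap, quadratureGap, quadratureGap, ← Finset.sum_Ico_consecutive _ hNn hnm,
    ← intervalIntegral.integral_add_adjacent_intervals
      (intervalIntegrable_natCast_of_antitoneOn hg le_rfl hNn)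
      (intervalIntegrable_natCast_of_antitoneOn hg hNn hnm)]
  ring

lemma quadratureGap_succ_pos (hconv : ConvexOn ℝ (Set.Ici (n : ℝ)) g)
    (hanti : StrictAntiOn g (Set.Ici (n : ℝ))) (hx : (n : ℝ) + 1 / 2 < x n) :
    0 < quadratureGap g x n (n + 1) := by
  have hint := intervalIntegrable_natCast_of_antitoneOn hanti.antitoneOn le_rfl n.le_succ
  have hmid := sub_mul_midpoint_le_integral_of_convexOn (by simp)
    (hconv.subset Set.Icc_subset_Ici_self (convex_Icc _ _)) hint
  have hnode : g (x n) < g (n + 1 / 2) :=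
    hanti (Set.mem_Ici.2 (by linarith)) (Set.mem_Ici.2 (by linarith)) hx
  push_cast at hmid
  rw [show ((n : ℝ) + (n + 1)) / 2 = n + 1 / 2 by ring] at hmid
  simp only [quadratureGap, Nat.Ico_succ_singleton, Finset.sum_singleton]
  push_cast
  linarith

lemma strictMono_quadratureGap_add (hconv : ConvexOn ℝ (Set.Ici (N : ℝ)) g)
    (hanti : StrictAntiOn g (Set.Ici (N : ℝ))) (hx : ∀ k : ℕ, (k : ℝ) + 1 / 2 < x k) :
    StrictMono fun i => quadratureGap g x N (N + i) := by
  refine strictMono_nat_of_lt_succ fun i => ?_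
  have hsub : Set.Ici ((N + i : ℕ) : ℝ) ⊆ Set.Ici (N : ℝ) :=
    Set.Ici_subset_Ici.2 (Nat.cast_le.2 (N.le_add_right i))
  have hpos := quadratureGap_succ_pos (hconv.subset hsub (convex_Ici _)) (hanti.mono hsub)
    (hx (N + i))
  have hadd := quadratureGap_add_adjacent (x := x) hanti.antitoneOn (N.le_add_right i)
    (N + i).le_succ
  change quadratureGap g x N (N + i) < quadratureGap g x N (N + i + 1)
  linarith

lemma quadratureGap_le_sub (hg : AntitoneOn g (Set.Ici (N : ℝ)))
    (hx : ∀ k : ℕ, x k ∈ Set.Icc (k : ℝ) (k + 1)) (hNn : N ≤ n) :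
    quadratureGap g x N n ≤ g N - g n := by
  have hleft : ∫ y in (N : ℝ)..(n : ℝ), g y ≤ ∑ k ∈ Finset.Ico N n, g k :=
    (hg.mono Set.Icc_subset_Ici_self).integral_le_sum_Ico hNn
  have hright : ∑ k ∈ Finset.Ico N n, g (k + 1 : ℕ) ≤ ∑ k ∈ Finset.Ico N n, g (x k) := by
    refine Finset.sum_le_sum fun k hk => ?_
    have hNk : (N : ℝ) ≤ k := Nat.cast_le.2 (Finset.mem_Ico.1 hk).1
    rw [Nat.cast_add_one]
    exact hg (hNk.trans (hx k).1) (Set.mem_Ici.2 (by linarith)) (hx k).2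
  have htelescope := Finset.sum_Ico_sub (fun k : ℕ => g k) hNn
  rw [Finset.sum_sub_distrib] at htelescope
  rw [quadratureGap]
  linarith

lemma quadratureGap_le_add (hanti : AntitoneOn g (Set.Ici (N : ℝ)))
    (hnonneg : ∀ y ∈ Set.Ici (N : ℝ), 0 ≤ g y) (hx : ∀ k : ℕ, x k ∈ Set.Icc (k : ℝ) (k + 1))
    (hNn : N ≤ n) (hnm : n ≤ m) : quadratureGap g x N m ≤ quadratureGap g x N n + g n := by
  have htail := quadratureGap_le_sub
    (hanti.mono (Set.Ici_subset_Ici.2 (Nat.cast_le.2 hNn))) hx hnm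
  have hadd := quadratureGap_add_adjacent (x := x) hanti hNn hnm
  have hgm := hnonneg m (Set.mem_Ici.2 (Nat.cast_le.2 (hNn.trans hnm)))
  linarith

lemma tendsto_quadratureGap (hg : ConvexDecreasingOn g (Set.Ici (N : ℝ)))
    (hx : ∀ k : ℕ, x k ∈ Set.Ioc ((k : ℝ) + 1 / 2) (k + 1)) :
    Tendsto (quadratureGap g x N) atTop (𝓝 (quadratureGapLim g x N)) := by
  have hmono :=
    (strictMono_quadratureGap_add hg.convexOn hg.strictAntiOn fun k => (hx k).1).monotone
  have hbdd : BddAbove (Set.range fun i => quadratureGap g x N (N + i)) := by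
    refine ⟨quadratureGap g x N N + g N, ?_⟩
    rintro _ ⟨i, rfl⟩
    exact quadratureGap_le_add hg.strictAntiOn.antitoneOn hg.nonneg
      (fun k => ⟨by linarith [(hx k).1], (hx k).2⟩) le_rfl (N.le_add_right i)
  have hlim := tendsto_atTop_ciSup hmono hbdd
  simp only [add_comm N] at hlim
  exact tendsto_nhds_limUnder ⟨_, (tendsto_add_atTop_iff_nat N).1 hlim⟩

lemma quadratureGap_lt_quadratureGapLim (hg : ConvexDecreasingOn g (Set.Ici (N : ℝ)))
    (hx : ∀ k : ℕ, x k ∈ Set.Ioc ((k : ℝ) + 1 / 2) (k + 1)) (hNn : N ≤ n) :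
    quadratureGap g x N n < quadratureGapLim g x N := by
  have hmono := strictMono_quadratureGap_add hg.convexOn hg.strictAntiOn fun k => (hx k).1
  have hlim := (tendsto_add_atTop_iff_nat N).2 (tendsto_quadratureGap hg hx)
  simp only [add_comm _ N] at hlim
  obtain ⟨i, rfl⟩ := Nat.exists_eq_add_of_le hNn
  exact (hmono i.lt_succ_self).trans_le (hmono.monotone.ge_of_tendsto hlim _)

lemma quadratureGapLim_pos (hg : ConvexDecreasingOn g (Set.Ici (N : ℝ)))
    (hx : ∀ k : ℕ, x k ∈ Set.Ioc ((k : ℝ) + 1 / 2) (k + 1)) : 0 < quadratureGapLim g x N := by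
  simpa [quadratureGap] using quadratureGap_lt_quadratureGapLim hg hx le_rfl

lemma quadratureGapLim_le_add (hg : ConvexDecreasingOn g (Set.Ici (N : ℝ)))
    (hx : ∀ k : ℕ, x k ∈ Set.Ioc ((k : ℝ) + 1 / 2) (k + 1)) (hNn : N ≤ n) :
    quadratureGapLim g x N ≤ quadratureGap g x N n + g n :=
  le_of_tendsto (tendsto_quadratureGap hg hx) <|
    (eventually_ge_atTop n).mono fun _ hnm => quadratureGap_le_add hg.strictAntiOn.antitoneOn
      hg.nonneg (fun k => ⟨by linarith [(hx k).1], (hx k).2⟩) hNn hnm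

end QuadratureGap

/-! ### Harmonic numbers as nodes -/

lemma strictAnti_harmonic_sub_log_add_half :
    StrictAnti fun k : ℕ => (harmonic k : ℝ) - log (k + 1 / 2) := by
  refine strictAnti_nat_of_succ_lt fun k => ?_
  have hk : (0 : ℝ) < k + 1 / 2 := by positivity
  have hlog := lt_log_one_add_of_pos (x := 1 / ((k : ℝ) + 1 / 2)) (by positivity)
  have hleft : 2 * (1 / ((k : ℝ) + 1 / 2)) / (1 / ((k : ℝ) + 1 / 2) + 2) = ((k : ℝ) + 1)⁻¹ := by
    field_simp
    ring
  have hright : 1 + 1 / ((k : ℝ) + 1 / 2) = ((k : ℝ) + 1 + 1 / 2) / (k + 1 / 2) := by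
    field_simp
    ring
  rw [hleft, hright, log_div (by positivity) hk.ne'] at hlog
  rw [harmonic_succ]
  push_cast
  linarith

lemma tendsto_harmonic_sub_log_add_half :
    Tendsto (fun k : ℕ => (harmonic k : ℝ) - log (k + 1 / 2)) atTop
      (𝓝 eulerMascheroniConstant) := by
  refine tendsto_of_tendsto_of_tendsto_of_le_of_le' tendsto_harmonic_sub_log_add_one
    tendsto_harmonic_sub_log (Eventually.of_forall fun k => ?_) ?_
  · gcongr
    norm_num
  · filter_upwards [eventually_gt_atTop 0] with k hk
    gcongr
    linarith

lemma log_add_half_lt_harmonic_sub (k : ℕ) :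
    log ((k : ℝ) + 1 / 2) < harmonic k - eulerMascheroniConstant := by
  have hlim := strictAnti_harmonic_sub_log_add_half.antitone.le_of_tendsto
    tendsto_harmonic_sub_log_add_half (k + 1)
  have hstep := strictAnti_harmonic_sub_log_add_half k.lt_succ_self
  linarith

lemma harmonic_sub_lt_log_add_one (k : ℕ) :
    (harmonic k : ℝ) - eulerMascheroniConstant < log (k + 1) := by
  have hseq := eulerMascheroniSeq_lt_eulerMascheroniConstant k
  rw [eulerMascheroniSeq] at hseq
  linarith

/-- The node `exp (H_k - γ)`, at which the logarithm takes the value `H_k - γ`. -/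
noncomputable def harmonicNode (k : ℕ) : ℝ :=
  exp (harmonic k - eulerMascheroniConstant)

lemma harmonicNode_mem_Ioc (k : ℕ) : harmonicNode k ∈ Set.Ioc ((k : ℝ) + 1 / 2) (k + 1) :=
  ⟨(log_lt_iff_lt_exp (by positivity)).1 (log_add_half_lt_harmonic_sub k),
    ((lt_log_iff_exp_lt (by positivity)).1 (harmonic_sub_lt_log_add_one k)).le⟩

/-! ### The integrand `1 / (s + log x) ^ p` -/

section LogInvPow

variable {s x : ℝ}

lemma add_log_pos (hx : x ∈ Set.Ioi (exp (-s))) : 0 < s + log x := by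
  have := (lt_log_iff_exp_lt ((exp_pos _).trans hx)).2 hx
  linarith

lemma convexOn_one_div_pow (p : ℕ) : ConvexOn ℝ (Set.Ioi 0) fun y : ℝ => 1 / y ^ p := by
  simpa using convexOn_zpow (𝕜 := ℝ) (-p)

lemma convexOn_one_div_add_log_pow (p : ℕ) (s : ℝ) :
    ConvexOn ℝ (Set.Ioi (exp (-s))) fun x => 1 / (s + log x) ^ p := by
  have hpos : Set.Ioi (exp (-s)) ⊆ Set.Ioi 0 := Set.Ioi_subset_Ioi (exp_pos _).le
  have himage : (fun x => s + log x) '' Set.Ioi (exp (-s)) ⊆ Set.Ioi 0 :=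
    Set.image_subset_iff.2 fun x => add_log_pos
  have hcont : ContinuousOn (fun x => s + log x) (Set.Ioi (exp (-s))) :=
    continuousOn_const.add (continuousOn_log.mono fun x hx => (hpos hx).ne')
  have hconv : Convex ℝ ((fun x => s + log x) '' Set.Ioi (exp (-s))) :=
    (isPreconnected_Ioi.image _ hcont).ordConnected.convex
  refine ((convexOn_one_div_pow p).subset himage hconv).comp_concaveOn
    ((concaveOn_const s (convex_Ioi _)).add
      (strictConcaveOn_log_Ioi.concaveOn.subset hpos (convex_Ioi _))) ?_
  intro y hy z _ hyz
  exact one_div_le_one_div_of_le (pow_pos (himage hy) p)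
    (pow_le_pow_left₀ (himage hy).le hyz p)

lemma strictAntiOn_one_div_add_log_pow {p : ℕ} (hp : p ≠ 0) (s : ℝ) :
    StrictAntiOn (fun x => 1 / (s + log x) ^ p) (Set.Ioi (exp (-s))) := by
  intro x hx y _ hxy
  have hlog : log x < log y := log_lt_log ((exp_pos _).trans hx) hxy
  have hsx := add_log_pos hx
  exact one_div_lt_one_div_of_lt (by positivity)
    (pow_lt_pow_left₀ (by linarith) hsx.le hp)

end LogInvPow

/-! ### Differentiation in the parameter -/

lemma hasDerivAt_one_div_add_pow {𝕜 : Type*} [NontriviallyNormedField 𝕜] {s u : 𝕜}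
    (h : s + u ≠ 0) (p : ℕ) :
    HasDerivAt (fun s => 1 / (s + u) ^ p) (-(p * (1 / (s + u) ^ (p + 1)))) s := by
  have hinv := (((hasDerivAt_id s).add_const u).fun_pow p).inv (pow_ne_zero p h)
  simp only [one_div]
  refine hinv.congr_deriv ?_
  cases p with
  | zero => simp
  | succ q =>
    simp only [id, Nat.add_sub_cancel, mul_one]
    field_simp
    ring

lemma hasDerivAt_integral_one_div_add_pow {α : Type*} [MeasurableSpace α] {μ : Measure α}
    [IsFiniteMeasure μ] {u : α → ℝ} (hu : AEMeasurable u μ) {c s : ℝ} (hc : ∀ᵐ a ∂μ, c ≤ u a)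
    (hs : 0 < s + c) (p : ℕ) :
    HasDerivAt (fun s => ∫ a, 1 / (s + u a) ^ p ∂μ)
      (-(p * ∫ a, 1 / (s + u a) ^ (p + 1) ∂μ)) s := by
  obtain ⟨r, hcr, hrs⟩ := exists_between (show -c < s by linarith)
  have hmeas : ∀ q t, AEStronglyMeasurable (fun a => 1 / (t + u a) ^ q) μ := fun q t =>
    (((hu.const_add t).pow_const q).const_div 1).aestronglyMeasurable
  have hbound : ∀ q, ∀ t ∈ Set.Ioi r, ∀ a, c ≤ u a →
      ‖1 / (t + u a) ^ q‖ ≤ 1 / (r + c) ^ q := by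
    intro q t ht a ha
    have hrc : 0 < r + c := by linarith
    have hle : r + c ≤ t + u a := add_le_add (le_of_lt ht) ha
    rw [norm_of_nonneg (one_div_nonneg.2 (pow_nonneg (hrc.le.trans hle) q))]
    gcongr
  have hderiv := (hasDerivAt_integral_of_dominated_loc_of_deriv_le
    (F := fun t a => 1 / (t + u a) ^ p) (F' := fun t a => -(p * (1 / (t + u a) ^ (p + 1))))
    (bound := fun _ => p * (1 / (r + c) ^ (p + 1))) (Ioi_mem_nhds hrs)
    (Eventually.of_forall (hmeas p))
    (.of_bound (hmeas p s) _ (hc.mono (hbound p s hrs)))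
    ((hmeas (p + 1) s).const_mul _).neg ?_ (integrable_const _) ?_).2
  · rwa [integral_neg, integral_const_mul] at hderiv
  · filter_upwards [hc] with a ha t ht
    rw [norm_neg, norm_mul, RCLike.norm_natCast]
    gcongr
    exact hbound (p + 1) t ht a ha
  · filter_upwards [hc] with a ha t ht
    have hrt : r < t := ht
    exact hasDerivAt_one_div_add_pow (by linarith : 0 < t + u a).ne' p

section IteratedDeriv

variable {𝕜 : Type*} [NontriviallyNormedField 𝕜] {S : Set 𝕜}
  {E : Type*} [NormedAddCommGroup E] [NormedSpace 𝕜 E] {G : ℕ → 𝕜 → E} {F : ℕ → 𝕜 → 𝕜}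

lemma eqOn_iteratedDerivWithin_of_hasDerivWithinAt (hS : UniqueDiffOn 𝕜 S)
    (hG : ∀ j, ∀ s ∈ S, HasDerivWithinAt (G j) (G (j + 1) s) S s) (j : ℕ) :
    Set.EqOn (iteratedDerivWithin j (G 0) S) (G j) S := by
  induction j with
  | zero => simp [Set.EqOn]
  | succ j ih =>
    intro s hs
    rw [iteratedDerivWithin_succ, derivWithin_congr ih (ih hs)]
    exact (hG j s hs).derivWithin (hS s hs)

lemma contDiffOn_infty_of_hasDerivWithinAt (hS : UniqueDiffOn 𝕜 S)
    (hG : ∀ j, ∀ s ∈ S, HasDerivWithinAt (G j) (G (j + 1) s) S s) :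
    ContDiffOn 𝕜 (⊤ : ℕ∞) (G 0) S :=
  contDiffOn_of_differentiableOn_deriv fun j _ =>
    DifferentiableOn.congr (fun s hs => (hG j s hs).differentiableWithinAt)
      (eqOn_iteratedDerivWithin_of_hasDerivWithinAt hS hG j)

lemma hasDerivWithinAt_neg_one_pow_mul_factorial_mul {j : ℕ} {s : 𝕜}
    (hF : HasDerivWithinAt (F j) (-((j + 1 : ℕ) * F (j + 1) s)) S s) :
    HasDerivWithinAt (fun s => (-1) ^ j * (j.factorial * F j s))
      ((-1) ^ (j + 1) * ((j + 1).factorial * F (j + 1) s)) S s := by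
  refine ((hF.const_mul (j.factorial : 𝕜)).const_mul ((-1) ^ j)).congr_deriv ?_
  rw [Nat.factorial_succ]
  push_cast
  ring

lemma neg_one_pow_mul_iteratedDerivWithin_eq (hS : UniqueDiffOn 𝕜 S)
    (hF : ∀ j, ∀ s ∈ S, HasDerivWithinAt (F j) (-((j + 1 : ℕ) * F (j + 1) s)) S s) (j : ℕ)
    {s : 𝕜} (hs : s ∈ S) :
    (-1) ^ j * iteratedDerivWithin j (F 0) S s = j.factorial * F j s := by
  have hiter := eqOn_iteratedDerivWithin_of_hasDerivWithinAt hS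
    (fun j s hs => hasDerivWithinAt_neg_one_pow_mul_factorial_mul (hF j s hs)) j hs
  simp only [pow_zero, Nat.factorial_zero, Nat.cast_one, one_mul] at hiter
  rw [hiter, ← mul_assoc, ← mul_pow]
  simp

lemma contDiffOn_infty_of_hasDerivWithinAt_neg_mul (hS : UniqueDiffOn 𝕜 S)
    (hF : ∀ j, ∀ s ∈ S, HasDerivWithinAt (F j) (-((j + 1 : ℕ) * F (j + 1) s)) S s) :
    ContDiffOn 𝕜 (⊤ : ℕ∞) (F 0) S := by
  simpa using contDiffOn_infty_of_hasDerivWithinAt hS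
    fun j s hs => hasDerivWithinAt_neg_one_pow_mul_factorial_mul (hF j s hs)

end IteratedDeriv

/-! ### The functions `θ_n` with exponent `p` -/

/-- The analogue of `thetaFun N n` with `p`-th powers in the denominators. Up to the factor
`(-1) ^ j * j!`, exponent `p = j + 1` gives the `j`-th derivative of `thetaFun N n`. -/
noncomputable def thetaPow (N p n : ℕ) (s : ℝ) : ℝ :=
  quadratureGap (fun x => 1 / (s + log x) ^ p) harmonicNode N n

/-- The limit of `thetaPow N p n` as `n → ∞`. -/
noncomputable def thetaPowLim (N p : ℕ) (s : ℝ) : ℝ :=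
  quadratureGapLim (fun x => 1 / (s + log x) ^ p) harmonicNode N

lemma thetaPow_eq_integral_sub_sum (N p n : ℕ) (s : ℝ) :
    thetaPow N p n s = (∫ x in (N : ℝ)..(n : ℝ), 1 / (s + log x) ^ p) -
      ∑ k ∈ Finset.Ico N n, 1 / ((harmonic k : ℝ) - eulerMascheroniConstant + s) ^ p := by
  simp only [thetaPow, quadratureGap, harmonicNode, log_exp, add_comm s]

lemma thetaPow_one (N n : ℕ) : thetaPow N 1 n = thetaFun N n := by
  ext s
  simp only [thetaPow_eq_integral_sub_sum, thetaFun, pow_one]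

lemma thetaPowLim_one (N : ℕ) : thetaPowLim N 1 = thetaLim N := by
  ext s
  simp only [thetaLim, ← thetaPow_one]
  rfl

section ThetaPow

variable {N n p : ℕ} {s : ℝ}

lemma Ici_natCast_subset_Ioi_exp_neg (hN : 0 < N) (hs : -log N < s) :
    Set.Ici (N : ℝ) ⊆ Set.Ioi (exp (-s)) :=
  Set.Ici_subset_Ioi.2 ((lt_log_iff_exp_lt (Nat.cast_pos.2 hN)).1 (by linarith))

lemma add_log_pos_of_natCast_le (hN : 0 < N) (hs : -log N < s) {x : ℝ} (hx : (N : ℝ) ≤ x) :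
    0 < s + log x :=
  add_log_pos (Ici_natCast_subset_Ioi_exp_neg hN hs hx)

lemma convexDecreasingOn_one_div_add_log_pow (hN : 0 < N) (hp : p ≠ 0) (hs : -log N < s) :
    ConvexDecreasingOn (fun x => 1 / (s + log x) ^ p) (Set.Ici (N : ℝ)) where
  convexOn := (convexOn_one_div_add_log_pow p s).subset
    (Ici_natCast_subset_Ioi_exp_neg hN hs) (convex_Ici _)
  strictAntiOn := (strictAntiOn_one_div_add_log_pow hp s).mono
    (Ici_natCast_subset_Ioi_exp_neg hN hs)
  nonneg _ hx := one_div_nonneg.2 (pow_nonneg (add_log_pos_of_natCast_le hN hs hx).le p)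

lemma tendsto_thetaPow (hN : 0 < N) (hp : p ≠ 0) (hs : -log N < s) :
    Tendsto (fun n => thetaPow N p n s) atTop (𝓝 (thetaPowLim N p s)) :=
  tendsto_quadratureGap (convexDecreasingOn_one_div_add_log_pow hN hp hs) harmonicNode_mem_Ioc

lemma thetaPowLim_pos (hN : 0 < N) (hp : p ≠ 0) (hs : -log N < s) : 0 < thetaPowLim N p s :=
  quadratureGapLim_pos (convexDecreasingOn_one_div_add_log_pow hN hp hs) harmonicNode_mem_Ioc

lemma dist_thetaPowLim_thetaPow_le (hN : 0 < N) (hp : p ≠ 0) (hs : -log N < s) (hNn : N ≤ n) :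
    dist (thetaPowLim N p s) (thetaPow N p n s) ≤ 1 / (s + log n) ^ p := by
  have hg := convexDecreasingOn_one_div_add_log_pow hN hp hs
  have hlower : thetaPow N p n s < thetaPowLim N p s :=
    quadratureGap_lt_quadratureGapLim hg harmonicNode_mem_Ioc hNn
  have hupper : thetaPowLim N p s ≤ thetaPow N p n s + 1 / (s + log n) ^ p :=
    quadratureGapLim_le_add hg harmonicNode_mem_Ioc hNn
  rw [Real.dist_eq, abs_of_pos (sub_pos.2 hlower)]
  linarith

lemma tendsto_one_div_add_log_natCast_pow (hp : p ≠ 0) (s : ℝ) :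
    Tendsto (fun n : ℕ => 1 / (s + log n) ^ p) atTop (𝓝 0) := by
  have hlog : Tendsto (fun n : ℕ => s + log n) atTop atTop :=
    tendsto_atTop_add_const_left _ _ (tendsto_log_atTop.comp tendsto_natCast_atTop_atTop)
  simp only [one_div]
  exact ((tendsto_pow_atTop hp).comp hlog).inv_tendsto_atTop

lemma tendstoLocallyUniformlyOn_thetaPow (hN : 0 < N) (hp : p ≠ 0) :
    TendstoLocallyUniformlyOn (thetaPow N p) (thetaPowLim N p) atTop (Set.Ioi (-log N)) := by
  rw [Metric.tendstoLocallyUniformlyOn_iff]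
  intro ε hε s hs
  obtain ⟨r, hNr, hrs⟩ := exists_between (Set.mem_Ioi.1 hs)
  refine ⟨Set.Ioi r, mem_nhdsWithin_of_mem_nhds (Ioi_mem_nhds hrs), ?_⟩
  filter_upwards [eventually_ge_atTop N,
    (tendsto_one_div_add_log_natCast_pow hp r).eventually_lt_const hε] with n hNn hnε t ht
  have hrt : r < t := ht
  have hpos : 0 < r + log n := add_log_pos_of_natCast_le hN hNr (Nat.cast_le.2 hNn)
  calc dist (thetaPowLim N p t) (thetaPow N p n t)
      ≤ 1 / (t + log n) ^ p := dist_thetaPowLim_thetaPow_le hN hp (hNr.trans hrt) hNn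
    _ ≤ 1 / (r + log n) ^ p := by gcongr
    _ < ε := hnε

lemma hasDerivAt_thetaPow (hN : 0 < N) (hNn : N ≤ n) (hs : -log N < s) (p : ℕ) :
    HasDerivAt (thetaPow N p n) (-(p * thetaPow N (p + 1) n s)) s := by
  have hlog : ∀ᵐ x ∂volume.restrict (Set.Ioc (N : ℝ) n), log N ≤ log x :=
    (ae_restrict_mem measurableSet_Ioc).mono fun x hx =>
      log_le_log (Nat.cast_pos.2 hN) hx.1.le
  have hnode : ∀ k ∈ Finset.Ico N n, 0 < s + log (harmonicNode k) := by
    intro k hk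
    have hNk : (N : ℝ) ≤ k := Nat.cast_le.2 (Finset.mem_Ico.1 hk).1
    exact add_log_pos_of_natCast_le hN hs (by linarith [(harmonicNode_mem_Ioc k).1])
  have hintegral := hasDerivAt_integral_one_div_add_pow measurable_log.aemeasurable hlog
    (add_log_pos_of_natCast_le hN hs le_rfl) p
  have hsum := HasDerivAt.fun_sum fun k hk => hasDerivAt_one_div_add_pow (hnode k hk).ne' p
  simp only [← intervalIntegral.integral_of_le (Nat.cast_le.2 hNn)] at hintegral
  refine (hintegral.sub hsum).congr_deriv ?_
  rw [Finset.sum_neg_distrib, ← Finset.mul_sum, thetaPow, quadratureGap]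
  ring

lemma hasDerivAt_thetaPowLim (hN : 0 < N) (hp : p ≠ 0) (hs : -log N < s) :
    HasDerivAt (thetaPowLim N p) (-(p * thetaPowLim N (p + 1) s)) s := by
  have hderiv : TendstoLocallyUniformlyOn (fun n s => -(p * thetaPow N (p + 1) n s))
      (fun s => -(p * thetaPowLim N (p + 1) s)) atTop (Set.Ioi (-log N)) := by
    simpa only [neg_mul, Function.comp_def, smul_eq_mul] using
      (uniformContinuous_const_smul (-p : ℝ)).comp_tendstoLocallyUniformlyOn
        (tendstoLocallyUniformlyOn_thetaPow hN p.succ_ne_zero)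
  exact hasDerivAt_of_tendstoLocallyUniformlyOn isOpen_Ioi hderiv
    ((eventually_ge_atTop N).mono fun n hNn s hs => hasDerivAt_thetaPow hN hNn hs p)
    (fun s hs => tendsto_thetaPow hN hp hs) hs

lemma neg_one_pow_mul_iteratedDerivWithin_thetaFun (hN : 0 < N) (hNn : N ≤ n) (hs : -log N < s)
    (j : ℕ) : (-1) ^ j * iteratedDerivWithin j (thetaFun N n) (Set.Ioi (-log N)) s =
      j.factorial * thetaPow N (j + 1) n s := by
  rw [← thetaPow_one]
  exact neg_one_pow_mul_iteratedDerivWithin_eq (F := fun j => thetaPow N (j + 1) n)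
    (uniqueDiffOn_Ioi _)
    (fun j _ ht => (hasDerivAt_thetaPow hN hNn ht (j + 1)).hasDerivWithinAt) j hs

lemma neg_one_pow_mul_iteratedDerivWithin_thetaLim (hN : 0 < N) (hs : -log N < s) (j : ℕ) :
    (-1) ^ j * iteratedDerivWithin j (thetaLim N) (Set.Ioi (-log N)) s =
      j.factorial * thetaPowLim N (j + 1) s := by
  rw [← thetaPowLim_one]
  exact neg_one_pow_mul_iteratedDerivWithin_eq (F := fun j => thetaPowLim N (j + 1))
    (uniqueDiffOn_Ioi _)
    (fun j _ ht => (hasDerivAt_thetaPowLim hN j.succ_ne_zero ht).hasDerivWithinAt) j hs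

lemma contDiffOn_thetaLim (hN : 0 < N) :
    ContDiffOn ℝ (⊤ : ℕ∞) (thetaLim N) (Set.Ioi (-log N)) := by
  rw [← thetaPowLim_one]
  exact contDiffOn_infty_of_hasDerivWithinAt_neg_mul (F := fun j => thetaPowLim N (j + 1))
    (uniqueDiffOn_Ioi _)
    fun j _ ht => (hasDerivAt_thetaPowLim hN j.succ_ne_zero ht).hasDerivWithinAt

end ThetaPow

theorem stmt_15 (N : ℕ) (hN : 0 < N) (t : ℝ) (ht : -Real.log N < t) :
    (∀ j : ℕ, ∃ L : ℝ, 0 < L ∧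
      Filter.Tendsto
        (fun n : ℕ =>
          (-1 : ℝ)^j * iteratedDerivWithin j (thetaFun N n) (Set.Ioi (-Real.log N)) t)
        Filter.atTop (𝓝 L) ∧
      Filter.Tendsto
        (fun n : ℕ =>
          (Nat.factorial j : ℝ) *
            ((∫ x in (N : ℝ)..(n : ℝ), 1 / (t + Real.log x)^(j + 1)) -
              ∑ k ∈ Finset.Ico N n,
                1 / ((harmonic k : ℝ) - Real.eulerMascheroniConstant + t)^(j + 1)))
        Filter.atTop (𝓝 L)) ∧
    ContinuousOn (thetaLim N) (Set.Ioi (-Real.log N)) ∧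
    ContDiffOn ℝ (⊤ : ℕ∞) (thetaLim N) (Set.Ioi (-Real.log N)) ∧
    ∀ j : ℕ, ∀ s ∈ Set.Ioi (-Real.log (N : ℝ)),
      0 < (-1 : ℝ)^j * iteratedDerivWithin j (thetaLim N) (Set.Ioi (-Real.log N)) s := by
  have hpos : ∀ j s, -log N < s → 0 < (j.factorial : ℝ) * thetaPowLim N (j + 1) s := fun j s hs =>
    mul_pos (Nat.cast_pos.2 j.factorial_pos) (thetaPowLim_pos hN j.succ_ne_zero hs)
  have hsmooth := contDiffOn_thetaLim hN
  refine ⟨fun j => ⟨j.factorial * thetaPowLim N (j + 1) t, hpos j t ht, ?_, ?_⟩,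
    hsmooth.continuousOn, hsmooth, fun j s hs => ?_⟩
  · refine ((tendsto_thetaPow hN j.succ_ne_zero ht).const_mul _).congr' ?_
    filter_upwards [eventually_ge_atTop N] with n hNn
    exact (neg_one_pow_mul_iteratedDerivWithin_thetaFun hN hNn ht j).symm
  · simpa only [thetaPow_eq_integral_sub_sum] using
      (tendsto_thetaPow hN j.succ_ne_zero ht).const_mul (j.factorial : ℝ)
  · rw [neg_one_pow_mul_iteratedDerivWithin_thetaLim hN hs]
    exact hpos j s hs
end
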